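/- Let b* be a unit vector in ℝ^n maximizing the smallest eigenvalue of W(b) over all unit vectors b, and let x* be a unit eigenvector of W(b*) corresponding to the smallest eigenvalue of W(b*). Then all entries of x* and of b* are nonzero, and the signs interlace: either sgn(x*_i) = (−1)^i sgn(b*_i) for all i, or sgn(x*_i) = −(−1)^i sgn(b*_i) for all i; equivalently sgn(x*) = ±σ* sgn(b*). -/

import Mathlib

open Matrix BigOperators

/-- The Cauchy matrix with entries `1/(λᵢ + λⱼ)`. -/
noncomputable def cauchyPsi (n : ℕ) (lam : Fin n → ℝ) : Matrix (Fin n) (Fin n) ℝ :=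
  Matrix.of fun i j => 1 / (lam i + lam j)

/-- `W(b) = diag(b) Ψ diag(b)`. -/
noncomputable def cauchyW (n : ℕ) (lam : Fin n → ℝ) (b : Fin n → ℝ) :
    Matrix (Fin n) (Fin n) ℝ :=
  Matrix.diagonal b * cauchyPsi n lam * Matrix.diagonal b


/-- weights -/
noncomputable def cU (n : ℕ) (lam : Fin n → ℝ) (i : Fin n) : ℝ :=
  (∏ k, (lam i + lam k)) / ∏ k ∈ Finset.univ.erase i, (lam i - lam k)

lemma cauchyW_apply (n : ℕ) (lam b : Fin n → ℝ) (i j : Fin n) :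
    cauchyW n lam b i j = b i * (1 / (lam i + lam j)) * b j := by
  simp [cauchyW, cauchyPsi, Matrix.mul_diagonal, Matrix.diagonal_mul]

lemma cU_sum (n : ℕ) (lam : Fin n → ℝ) (hpos : ∀ i, 0 < lam i) (hmono : StrictMono lam)
    (i : Fin n) : ∑ k, cU n lam k / (lam i + lam k) = 1 := by
  classical
  have hinj : Set.InjOn lam (Finset.univ : Finset (Fin n)) := hmono.injective.injOn
  let P : Polynomial ℝ := ∏ l ∈ Finset.univ.erase i, (Polynomial.X + Polynomial.C (lam l))
  have hmon : P.Monic := Polynomial.monic_prod_of_monic _ _ fun l _ => Polynomial.monic_X_add_C _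
  have hdeg : P.natDegree = n - 1 := by
    rw [Polynomial.natDegree_prod_of_monic _ _ fun l _ => Polynomial.monic_X_add_C _]
    simp
  have hn : 0 < n := i.pos
  have h := Lagrange.leadingCoeff_eq_sum (s := Finset.univ) (v := lam) hinj (P := P) (by
    rw [Polynomial.degree_eq_natDegree hmon.ne_zero, hdeg]
    simp only [Finset.card_univ, Fintype.card_fin]
    norm_cast
    omega)
  rw [hmon.leadingCoeff] at h
  rw [h]
  refine Finset.sum_congr rfl fun k _ => ?_
  have h1 : P.eval (lam k) = ∏ l ∈ Finset.univ.erase i, (lam k + lam l) := by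
    simp [P, Polynomial.eval_prod]
  have h2 : lam k + lam i ≠ 0 := (add_pos (hpos k) (hpos i)).ne'
  rw [h1, cU, ← Finset.mul_prod_erase _ _ (Finset.mem_univ i), add_comm (lam i) (lam k),
    div_div, mul_comm _ (lam k + lam i), mul_div_mul_left _ _ h2]

lemma cU_sign (n : ℕ) (lam : Fin n → ℝ) (hpos : ∀ i, 0 < lam i) (hmono : StrictMono lam)
    (i : Fin n) : 0 < (-1 : ℝ) ^ (n - 1 - (i : ℕ)) * cU n lam i := by
  classical
  have h1 : ∏ k ∈ Finset.univ.erase i, (lam i - lam k)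
      = (-1 : ℝ) ^ (n - 1 - (i : ℕ)) * ∏ k ∈ Finset.univ.erase i, |lam i - lam k| := by
    have : ∀ k ∈ Finset.univ.erase i, lam i - lam k
        = (if i < k then (-1 : ℝ) else 1) * |lam i - lam k| := by
      intro k _
      split_ifs with h
      · rw [abs_of_neg (sub_neg.2 (hmono h))]; ring
      · rw [abs_of_nonneg (sub_nonneg.2 (hmono.monotone (not_lt.1 h)))]; ring
    rw [Finset.prod_congr rfl this, Finset.prod_mul_distrib, Finset.prod_ite]
    have h3 : (Finset.univ.erase i).filter (fun k => i < k) = Finset.Ioi i := by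
      ext k; simp; intro h; exact h.ne'
    rw [h3]; simp
  have h2 : 0 < ∏ k ∈ Finset.univ.erase i, |lam i - lam k| := by
    refine Finset.prod_pos fun k hk => abs_pos.2 (sub_ne_zero.2 fun h => ?_)
    exact (Finset.mem_erase.1 hk).1 (hmono.injective h).symm
  have h4 : 0 < ∏ k, (lam i + lam k) := Finset.prod_pos fun k _ => add_pos (hpos i) (hpos k)
  rw [cU, h1]
  rcases neg_one_pow_eq_or ℝ (n - 1 - (i : ℕ)) with h | h <;> rw [h]
  · simpa using div_pos h4 h2
  · have := div_pos h4 h2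
    rw [neg_one_mul, neg_one_mul, div_neg, neg_neg]; exact this

lemma cU_ne (n : ℕ) (lam : Fin n → ℝ) (hpos : ∀ i, 0 < lam i) (hmono : StrictMono lam)
    (i : Fin n) : cU n lam i ≠ 0 := by
  intro h
  have := cU_sign n lam hpos hmono i
  rw [h] at this; simp at this

lemma cU_orth (n : ℕ) (lam : Fin n → ℝ) (hpos : ∀ i, 0 < lam i) (hmono : StrictMono lam)
    (i j : Fin n) (hij : i ≠ j) :
    ∑ k, cU n lam k / ((lam i + lam k) * (lam k + lam j)) = 0 := by
  have hne : lam j - lam i ≠ 0 := sub_ne_zero.2 fun h => hij (hmono.injective h).symm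
  have : ∀ k, cU n lam k / ((lam i + lam k) * (lam k + lam j))
      = (cU n lam k / (lam i + lam k) - cU n lam k / (lam j + lam k)) / (lam j - lam i) := by
    intro k
    have h1 : lam i + lam k ≠ 0 := (add_pos (hpos i) (hpos k)).ne'
    have h2 : lam j + lam k ≠ 0 := (add_pos (hpos j) (hpos k)).ne'
    rw [add_comm (lam k) (lam j)]
    field_simp
    ring
  simp_rw [this]
  rw [← Finset.sum_div, Finset.sum_sub_distrib, cU_sum n lam hpos hmono, cU_sum n lam hpos hmono]
  simp

lemma cU_diag (n : ℕ) (lam : Fin n → ℝ) (hpos : ∀ i, 0 < lam i) (hmono : StrictMono lam)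
    (i : Fin n) :
    (∑ k, cU n lam k / ((lam i + lam k) * (lam k + lam i))) * cU n lam i = 1 := by
  have h1 : ∑ j, (∑ k, cU n lam k / ((lam i + lam k) * (lam k + lam j))) * cU n lam j
      = (∑ k, cU n lam k / ((lam i + lam k) * (lam k + lam i))) * cU n lam i := by
    refine Finset.sum_eq_single i (fun j _ hj => ?_) (by simp)
    rw [cU_orth n lam hpos hmono i j hj.symm, zero_mul]
  rw [← h1]
  simp_rw [Finset.sum_mul]
  rw [Finset.sum_comm]
  rw [← cU_sum n lam hpos hmono i]
  refine Finset.sum_congr rfl fun k _ => ?_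
  have : ∀ j, cU n lam k / ((lam i + lam k) * (lam k + lam j)) * cU n lam j
      = cU n lam k / (lam i + lam k) * (cU n lam j / (lam k + lam j)) := by
    intro j
    rw [div_mul_div_comm, div_mul_eq_mul_div]
  simp_rw [this]
  rw [← Finset.mul_sum, cU_sum n lam hpos hmono, mul_one]

lemma cauchyW_inv (n : ℕ) (lam : Fin n → ℝ) (hpos : ∀ i, 0 < lam i) (hmono : StrictMono lam)
    (b : Fin n → ℝ) (hb : ∀ i, b i ≠ 0) :
    cauchyW n lam b * cauchyW n lam (fun i => cU n lam i / b i) = 1 := by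
  ext i j
  rw [Matrix.mul_apply]
  have : ∀ k, cauchyW n lam b i k * cauchyW n lam (fun i => cU n lam i / b i) k j
     = b i / b j * ((cU n lam k / ((lam i + lam k) * (lam k + lam j))) * cU n lam j) := by
    intro k
    rw [cauchyW_apply, cauchyW_apply]
    have h1 : lam i + lam k ≠ 0 := (add_pos (hpos i) (hpos k)).ne'
    have h2 : lam k + lam j ≠ 0 := (add_pos (hpos k) (hpos j)).ne'
    have h3 := hb j
    have h4 := hb k
    field_simp
  simp_rw [this]
  rw [← Finset.mul_sum, ← Finset.sum_mul]
  by_cases hij : i = j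
  · subst hij
    rw [cU_diag n lam hpos hmono, div_self (hb i)]; simp
  · rw [cU_orth n lam hpos hmono i j hij]; simp [hij]

lemma cauchyW_herm (n : ℕ) (lam b : Fin n → ℝ) : (cauchyW n lam b).IsHermitian := by
  ext i j
  simp only [Matrix.conjTranspose_apply, cauchyW_apply, star_trivial]
  rw [add_comm (lam j)]; ring

lemma cW_spec_iff {n : ℕ} (A : Matrix (Fin n) (Fin n) ℝ) (a : ℝ) :
    a ∈ spectrum ℝ A ↔ ∃ v : Fin n → ℝ, v ≠ 0 ∧ A.mulVec v = a • v := by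
  rw [spectrum.mem_iff, Matrix.isUnit_iff_isUnit_det, isUnit_iff_ne_zero, not_not,
    ← Matrix.exists_mulVec_eq_zero_iff]
  refine exists_congr fun v => and_congr_right fun _ => ?_
  rw [Matrix.sub_mulVec, sub_eq_zero, Algebra.algebraMap_eq_smul_one, Matrix.smul_mulVec,
    Matrix.one_mulVec]
  exact eq_comm

lemma cW_spec_finite {n : ℕ} (A : Matrix (Fin n) (Fin n) ℝ) (hA : A.IsHermitian) :
    (spectrum ℝ A).Finite := by
  rw [hA.spectrum_real_eq_range_eigenvalues]; exact Set.finite_range _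

lemma cW_spec_nonempty {n : ℕ} (hn : 0 < n) (A : Matrix (Fin n) (Fin n) ℝ) (hA : A.IsHermitian) :
    (spectrum ℝ A).Nonempty := by
  have : Nonempty (Fin n) := ⟨⟨0, hn⟩⟩
  rw [hA.spectrum_real_eq_range_eigenvalues]; exact Set.range_nonempty _

lemma cauchyW_spec_nonneg (n : ℕ) (lam : Fin n → ℝ) (hpos : ∀ i, 0 < lam i)
    (b : Fin n → ℝ) (a : ℝ) (ha : a ∈ spectrum ℝ (cauchyW n lam b)) : 0 ≤ a := by
  obtain ⟨v, hv, hav⟩ := (cW_spec_iff _ _).1 ha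
  have hi : ∀ i, ∑ j, cauchyW n lam b i j * v j = a * v i := fun i => by
    have := congrFun hav i
    simpa [Matrix.mulVec, dotProduct] using this
  have h1 : ∑ i, lam i * v i * (∑ j, cauchyW n lam b i j * v j) = a * ∑ i, lam i * v i ^ 2 := by
    rw [Finset.mul_sum]
    refine Finset.sum_congr rfl fun i _ => ?_
    rw [hi]; ring
  have h2 : ∑ i, lam i * v i * (∑ j, cauchyW n lam b i j * v j)
      = ∑ i, ∑ j, lam i * v i * (cauchyW n lam b i j * v j) := by simp_rw [Finset.mul_sum]
  have h3 : ∑ i, ∑ j, lam i * v i * (cauchyW n lam b i j * v j)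
      + ∑ i, ∑ j, lam i * v i * (cauchyW n lam b i j * v j) = (∑ i, b i * v i) ^ 2 := by
    nth_rewrite 2 [Finset.sum_comm]
    rw [← Finset.sum_add_distrib, sq, Finset.sum_mul_sum]
    refine Finset.sum_congr rfl fun i _ => ?_
    rw [← Finset.sum_add_distrib]
    refine Finset.sum_congr rfl fun j _ => ?_
    rw [cauchyW_apply, cauchyW_apply, add_comm (lam j) (lam i)]
    have h1 : lam i + lam j ≠ 0 := (add_pos (hpos i) (hpos j)).ne'
    field_simp
  have h4 : 0 < ∑ i, lam i * v i ^ 2 := by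
    obtain ⟨i, hi⟩ := Function.ne_iff.1 hv
    refine Finset.sum_pos' (fun j _ => mul_nonneg (hpos j).le (sq_nonneg _))
      ⟨i, Finset.mem_univ _, mul_pos (hpos i) (by have : v i ≠ 0 := hi; positivity)⟩
  have h5 := sq_nonneg (∑ i, b i * v i)
  by_contra hneg
  have := mul_neg_of_neg_of_pos (not_le.1 hneg) h4
  linarith

lemma cauchyW_sInf_pos (n : ℕ) (hn : 0 < n) (lam : Fin n → ℝ) (hpos : ∀ i, 0 < lam i)
    (hmono : StrictMono lam) (b : Fin n → ℝ) (hb : ∀ i, b i ≠ 0) :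
    0 < sInf (spectrum ℝ (cauchyW n lam b)) := by
  have hA := cauchyW_herm n lam b
  have hmem := (cW_spec_nonempty hn _ hA).csInf_mem (cW_spec_finite _ hA)
  refine lt_of_le_of_ne (cauchyW_spec_nonneg n lam hpos b _ hmem) fun h0 => ?_
  rw [← h0] at hmem
  obtain ⟨v, hv, hav⟩ := (cW_spec_iff _ _).1 hmem
  have hinv := mul_eq_one_comm.1 (cauchyW_inv n lam hpos hmono b hb)
  apply hv
  rw [← Matrix.one_mulVec v, ← hinv, ← Matrix.mulVec_mulVec, hav]
  simp

lemma cW_rayleigh {n : ℕ} (A : Matrix (Fin n) (Fin n) ℝ) (hA : A.IsHermitian) (w : Fin n → ℝ) :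
    sInf (spectrum ℝ A) * (w ⬝ᵥ w) ≤ w ⬝ᵥ A.mulVec w := by
  set μ := sInf (spectrum ℝ A)
  have hB : (A - μ • (1 : Matrix (Fin n) (Fin n) ℝ)).PosSemidef := by
    have hBh : (A - μ • (1 : Matrix (Fin n) (Fin n) ℝ)).IsHermitian := by
      apply hA.sub
      ext i j; simp [Matrix.one_apply, eq_comm]
    rw [hBh.posSemidef_iff_eigenvalues_nonneg]
    intro i
    have hmem : hBh.eigenvalues i ∈ spectrum ℝ (A - μ • (1 : Matrix (Fin n) (Fin n) ℝ)) := by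
      rw [hBh.spectrum_real_eq_range_eigenvalues]; exact ⟨i, rfl⟩
    obtain ⟨v, hv, h⟩ := (cW_spec_iff _ _).1 hmem
    have : hBh.eigenvalues i + μ ∈ spectrum ℝ A := by
      refine (cW_spec_iff _ _).2 ⟨v, hv, ?_⟩
      rw [Matrix.sub_mulVec, Matrix.smul_mulVec, Matrix.one_mulVec, sub_eq_iff_eq_add] at h
      rw [h, add_smul]
    have := csInf_le (cW_spec_finite A hA).bddBelow this
    show 0 ≤ hBh.eigenvalues i
    linarith
  have := hB.dotProduct_mulVec_nonneg w
  simp only [star_trivial, Matrix.sub_mulVec, Matrix.smul_mulVec, Matrix.one_mulVec,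
    dotProduct_sub, dotProduct_smul, smul_eq_mul] at this
  linarith

lemma cW_inv_rayleigh {n : ℕ} (A M : Matrix (Fin n) (Fin n) ℝ) (hA : A.IsHermitian)
    (hAM : A * M = 1) (hμ : 0 < sInf (spectrum ℝ A)) (y : Fin n → ℝ) :
    sInf (spectrum ℝ A) * (y ⬝ᵥ M.mulVec y) ≤ y ⬝ᵥ y := by
  have hR := cW_rayleigh A hA (M.mulVec y)
  have hAw : A.mulVec (M.mulVec y) = y := by rw [Matrix.mulVec_mulVec, hAM, Matrix.one_mulVec]
  rw [hAw, dotProduct_comm (M.mulVec y) y] at hR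
  set μ := sInf (spectrum ℝ A)
  set w := M.mulVec y
  have h : 0 ≤ (y - μ • w) ⬝ᵥ (y - μ • w) :=
    Finset.sum_nonneg fun i _ => mul_self_nonneg _
  simp only [dotProduct_sub, sub_dotProduct, dotProduct_smul, smul_dotProduct, smul_eq_mul] at h
  rw [dotProduct_comm w y] at h
  nlinarith

/-- main -/
theorem optimal_pair_sign_pattern (n : ℕ) (hn : 0 < n) (lam : Fin n → ℝ)
    (hpos : ∀ i, 0 < lam i) (hmono : StrictMono lam)
    (bstar : Fin n → ℝ) (hb_unit : ∑ i, bstar i ^ 2 = 1)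
    (hb_max : ∀ b : Fin n → ℝ, ∑ i, b i ^ 2 = 1 →
      sInf (spectrum ℝ (cauchyW n lam b)) ≤ sInf (spectrum ℝ (cauchyW n lam bstar)))
    (xstar : Fin n → ℝ) (hx_unit : ∑ i, xstar i ^ 2 = 1)
    (hx_eig : (cauchyW n lam bstar).mulVec xstar =
      sInf (spectrum ℝ (cauchyW n lam bstar)) • xstar) :
    (∀ i, xstar i ≠ 0) ∧ (∀ i, bstar i ≠ 0) ∧
      ((∀ i : Fin n, Real.sign (xstar i) = (-1 : ℝ) ^ (i : ℕ) * Real.sign (bstar i)) ∨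
        (∀ i : Fin n,
          Real.sign (xstar i) = -((-1 : ℝ) ^ (i : ℕ) * Real.sign (bstar i)))) := by
  have hn' : (0 : ℝ) < n := by exact_mod_cast hn
  have hA := cauchyW_herm n lam bstar
  have hb : ∀ i, bstar i ≠ 0 := by
    intro i hi
    have h1 := hb_max (fun _ => 1 / √n) (by
      simp [hn'.ne'])
    have h2 := cauchyW_sInf_pos n hn lam hpos hmono (fun _ => 1 / √n) (fun _ => by positivity)
    have h3 : (0 : ℝ) ∈ spectrum ℝ (cauchyW n lam bstar) := by
      refine (cW_spec_iff _ _).2 ⟨Pi.single i 1, by simp, ?_⟩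
      ext j
      simp [cauchyW_apply, hi]
    have h4 := csInf_le (cW_spec_finite _ hA).bddBelow h3
    linarith
  have hμ := cauchyW_sInf_pos n hn lam hpos hmono bstar hb
  have hinv := cauchyW_inv n lam hpos hmono bstar hb
  have hray := cW_inv_rayleigh _ _ hA hinv hμ
  set μ := sInf (spectrum ℝ (cauchyW n lam bstar)) with hμdef
  set t : Fin n → ℝ := fun i => cU n lam i / bstar i with ht
  have ht0 : ∀ i, t i ≠ 0 := fun i => div_ne_zero (cU_ne n lam hpos hmono i) (hb i)
  have hMx : ∀ i, xstar i = μ * (t i * ∑ j, t j * xstar j / (lam i + lam j)) := by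
    have h : xstar = μ • (cauchyW n lam t).mulVec xstar := by
      rw [← Matrix.mulVec_smul, ← hx_eig, Matrix.mulVec_mulVec, mul_eq_one_comm.1 hinv,
        Matrix.one_mulVec]
    intro i
    have := congrFun h i
    rw [Pi.smul_apply, smul_eq_mul] at this
    rw [this]
    congr 1
    rw [Matrix.mulVec, dotProduct, Finset.mul_sum]
    refine Finset.sum_congr rfl fun j _ => ?_
    rw [cauchyW_apply]; ring
  have hquad : ∀ y : Fin n → ℝ, y ⬝ᵥ (cauchyW n lam t).mulVec y
      = ∑ i, ∑ j, (t i * y i) * (t j * y j) / (lam i + lam j) := by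
    intro y
    rw [dotProduct]
    refine Finset.sum_congr rfl fun i _ => ?_
    rw [Matrix.mulVec, dotProduct, Finset.mul_sum]
    refine Finset.sum_congr rfl fun j _ => ?_
    rw [cauchyW_apply]; ring
  have hxx : μ * ∑ i, ∑ j, (t i * xstar i) * (t j * xstar j) / (lam i + lam j) = 1 := by
    rw [← hx_unit, Finset.mul_sum]
    refine Finset.sum_congr rfl fun i _ => ?_
    have e : ∑ j, (t i * xstar i) * (t j * xstar j) / (lam i + lam j)
        = (t i * xstar i) * ∑ j, t j * xstar j / (lam i + lam j) := by
      rw [Finset.mul_sum]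
      exact Finset.sum_congr rfl fun j _ => by ring
    rw [e]
    linear_combination (-xstar i) * hMx i
  have hyy := hray (fun i => SignType.sign (t i) * |xstar i|)
  have hts : ∀ i, t i * (SignType.sign (t i) * |xstar i|) = |t i * xstar i| := by
    intro i
    rw [abs_mul, ← mul_assoc, self_mul_sign]
  have hy1 : (fun i => (SignType.sign (t i) : ℝ) * |xstar i|) ⬝ᵥ
      (fun i => (SignType.sign (t i) : ℝ) * |xstar i|) = 1 := by
    rw [← hx_unit, dotProduct]
    refine Finset.sum_congr rfl fun i _ => ?_
    rcases lt_or_gt_of_ne (ht0 i) with h | h <;> simp [h, ← sq]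
  rw [hquad, hy1] at hyy
  simp only [hts] at hyy
  have hle : ∑ i, ∑ j, |t i * xstar i| * |t j * xstar j| / (lam i + lam j)
      ≤ ∑ i, ∑ j, (t i * xstar i) * (t j * xstar j) / (lam i + lam j) := by
    rw [← hxx] at hyy
    exact le_of_mul_le_mul_left hyy hμ
  have hterm : ∀ i j, (t i * xstar i) * (t j * xstar j) / (lam i + lam j)
      ≤ |t i * xstar i| * |t j * xstar j| / (lam i + lam j) := by
    intro i j
    rw [← abs_mul]
    exact div_le_div_of_nonneg_right (le_abs_self _) (add_pos (hpos i) (hpos j)).le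
  have hsame : ∀ i j, 0 ≤ (t i * xstar i) * (t j * xstar j) := by
    intro i j
    by_contra hneg
    have hneg := not_le.1 hneg
    refine absurd hle (not_le.2 ?_)
    refine Finset.sum_lt_sum (fun i _ => Finset.sum_le_sum fun j _ => hterm i j)
      ⟨i, Finset.mem_univ _, Finset.sum_lt_sum (fun j _ => hterm i j) ⟨j, Finset.mem_univ _, ?_⟩⟩
    refine div_lt_div_of_pos_right ?_ (add_pos (hpos i) (hpos j))
    rw [← abs_mul]
    exact hneg.trans_le (abs_nonneg _)
  obtain ⟨p, hp⟩ : ∃ p, xstar p ≠ 0 := by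
    by_contra! h
    simp [h] at hx_unit
  have hzp : t p * xstar p ≠ 0 := mul_ne_zero (ht0 p) hp
  have hall : ∀ i, 0 < (t i * xstar i) * (t p * xstar p) := by
    intro i
    have hS : 0 < (∑ j, t j * xstar j / (lam i + lam j)) * (t p * xstar p) := by
      rw [Finset.sum_mul]
      refine Finset.sum_pos' (fun j _ => ?_) ⟨p, Finset.mem_univ _, ?_⟩
      · rw [div_mul_eq_mul_div]
        exact div_nonneg (hsame j p) (add_pos (hpos i) (hpos j)).le
      · rw [div_mul_eq_mul_div]
        exact div_pos (mul_self_pos.2 hzp) (add_pos (hpos i) (hpos p))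
    have := hMx i
    have h2 : (t i * xstar i) * (t p * xstar p)
        = μ * t i ^ 2 * ((∑ j, t j * xstar j / (lam i + lam j)) * (t p * xstar p)) := by
      nth_rewrite 1 [hMx i]; ring
    rw [h2]
    have := ht0 i
    positivity
  have hx0 : ∀ i, xstar i ≠ 0 := by
    intro i h
    have := hall i
    simp [h] at this
  refine ⟨hx0, hb, ?_⟩
  have hsu : ∀ i : Fin n, 0 < (-1 : ℝ) ^ (n - 1) * ((-1 : ℝ) ^ (i : ℕ) * cU n lam i) := by
    intro i
    have h := cU_sign n lam hpos hmono i
    have h2 : (-1 : ℝ) ^ (n - 1) = (-1 : ℝ) ^ (n - 1 - (i : ℕ)) * (-1 : ℝ) ^ (i : ℕ) := by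
      rw [← pow_add]; congr 1; omega
    have h3 : (-1 : ℝ) ^ (i : ℕ) * (-1 : ℝ) ^ (i : ℕ) = 1 := by
      rw [← mul_pow]; simp
    rw [h2]
    calc 0 < _ := h
      _ = _ := by linear_combination (-(-1 : ℝ) ^ (n - 1 - (i : ℕ)) * cU n lam i) * h3
  have hq : ∀ i : Fin n, 0 < ((-1 : ℝ) ^ (n - 1) * (t p * xstar p)) *
      ((-1 : ℝ) ^ (i : ℕ) * (bstar i * xstar i)) := by
    intro i
    have h1 := mul_pos (hall i) (hsu i)
    have h2 : (t i * xstar i) * (t p * xstar p) *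
        ((-1 : ℝ) ^ (n - 1) * ((-1 : ℝ) ^ (i : ℕ) * cU n lam i))
        = t i ^ 2 * (((-1 : ℝ) ^ (n - 1) * (t p * xstar p)) *
      ((-1 : ℝ) ^ (i : ℕ) * (bstar i * xstar i))) := by
      have : cU n lam i = t i * bstar i := by rw [ht]; field_simp [hb i]
      rw [this]; ring
    rw [h2] at h1
    exact pos_of_mul_pos_right h1 (sq_nonneg _)
  rcases lt_trichotomy ((-1 : ℝ) ^ (n - 1) * (t p * xstar p)) 0 with h | h | h
  · right
    intro i
    have h1 := neg_of_mul_pos_right (hq i) h.le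
    rcases neg_one_pow_eq_or ℝ (i : ℕ) with e | e <;> rw [e] at h1 ⊢ <;>
    rcases lt_or_gt_of_ne (hb i) with hbi | hbi <;>
    rcases lt_or_gt_of_ne (hx0 i) with hxi | hxi <;>
    simp only [Real.sign_of_neg, Real.sign_of_pos, hbi, hxi] <;> first | (norm_num; done) | (exfalso; nlinarith)
  · have := hq p
    rw [h] at this; simp at this
  · left
    intro i
    have h1 := pos_of_mul_pos_right (hq i) h.le
    rcases neg_one_pow_eq_or ℝ (i : ℕ) with e | e <;> rw [e] at h1 ⊢ <;>
    rcases lt_or_gt_of_ne (hb i) with hbi | hbi <;>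
    rcases lt_or_gt_of_ne (hx0 i) with hxi | hxi <;>
    simp only [Real.sign_of_neg, Real.sign_of_pos, hbi, hxi] <;> first | (norm_num; done) | (exfalso; nlinarith)
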